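/- A simple graph with n vertices and at least n^(1+1/r) + 1 edges has girth at most 2r (i.e., contains a cycle of length at most 2r). -/

import Mathlib

/-!
If `G` has `n` vertices, average degree at least `δ ≥ 2` and girth more than `2 (k + 1)`, then
`δ (δ - 1) ^ k ≤ n` (Alon, Hoory and Linial); for `k + 1 = r` and `δ = n ^ (1 / r) + 1` this is
absurd. To see the bound, note that deleting a vertex of degree at most one preserves the lower
bound `δ` on the average degree, so all degrees may be taken to be at least two. Then the
non-backtracking random walk on darts never gets stuck and preserves the uniform measure. By
concavity of `log`, the logarithm of the number of non-backtracking ways of continuing a dart by `k`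
steps is on average at least `k` times the average over darts of `log (deg - 1)`, which is at least
`log (δ - 1)` by convexity of `x log (x - 1)`. So there are at least `n δ (δ - 1) ^ k`
non-backtracking walks of length `k + 1`. But those from a given vertex have distinct ends, as two
with a common end would create a short cycle, so there are at most `n ^ 2` of them in total.
-/

theorem convexOn_mul_log_sub_one :
    ConvexOn ℝ (Set.Ici 2) fun x : ℝ ↦ x * Real.log (x - 1) := by
  have hderiv : ∀ x : ℝ, 1 < x →
      HasDerivAt (fun x : ℝ ↦ x * Real.log (x - 1)) (Real.log (x - 1) + x * (x - 1)⁻¹) x := by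
    intro x hx
    have hlog : HasDerivAt (fun x : ℝ ↦ Real.log (x - 1)) (x - 1)⁻¹ x := by
      simpa using ((hasDerivAt_id x).sub_const 1).log (sub_ne_zero.2 hx.ne')
    exact ((hasDerivAt_id' x).mul hlog).congr_deriv (by simp)
  refine MonotoneOn.convexOn_of_deriv (convex_Ici 2)
    (fun x (hx : 2 ≤ x) ↦ (hderiv x (by linarith)).continuousAt.continuousWithinAt)
    (fun x hx ↦ ?_) (fun x hx y hy hxy ↦ ?_)
  · rw [interior_Ici, Set.mem_Ioi] at hx
    exact (hderiv x (by linarith)).differentiableAt.differentiableWithinAt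
  · rw [interior_Ici, Set.mem_Ioi] at hx hy
    rw [(hderiv x (by linarith)).deriv, (hderiv y (by linarith)).deriv]
    have hx0 : 0 < x - 1 := by linarith
    have hy0 : 0 < y - 1 := by linarith
    have hlog : 1 - (x - 1) / (y - 1) ≤ Real.log (y - 1) - Real.log (x - 1) := by
      rw [← Real.log_div hy0.ne' hx0.ne', ← inv_div]
      exact Real.one_sub_inv_le_log_of_pos (div_pos hy0 hx0)
    have hinv : x * (x - 1)⁻¹ - y * (y - 1)⁻¹ ≤ 1 - (x - 1) / (y - 1) := by
      have : 1 - (x - 1) / (y - 1) - (x * (x - 1)⁻¹ - y * (y - 1)⁻¹) =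
          (y - x) * (x - 2) / ((x - 1) * (y - 1)) := by
        field_simp
        ring
      have : 0 ≤ (y - x) * (x - 2) / ((x - 1) * (y - 1)) :=
        div_nonneg (mul_nonneg (by linarith) (by linarith)) (by positivity)
      linarith
    linarith

theorem sum_log_div_card_le_log_sum_div_card {ι : Type*} {s : Finset ι} (hs : s.Nonempty)
    {f : ι → ℝ} (hf : ∀ i ∈ s, 0 < f i) :
    (∑ i ∈ s, Real.log (f i)) / s.card ≤ Real.log ((∑ i ∈ s, f i) / s.card) := by
  have hs' : (s.card : ℝ) ≠ 0 := by simpa using hs.ne_empty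
  have := strictConcaveOn_log_Ioi.concaveOn.le_map_sum (t := s) (w := fun _ ↦ (s.card : ℝ)⁻¹)
    (fun _ _ ↦ by positivity) (by simp [hs']) hf
  simpa only [smul_eq_mul, ← Finset.mul_sum, div_eq_inv_mul] using this

theorem natCast_le_rpow_of_one_le (n : ℕ) {x : ℝ} (hx : 1 ≤ x) : (n : ℝ) ≤ (n : ℝ) ^ x := by
  rcases n.eq_zero_or_pos with rfl | hn
  · simpa using Real.rpow_nonneg le_rfl x
  · exact Real.self_le_rpow_of_one_le (mod_cast hn) hx

section

open Finset SimpleGraph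

variable {V : Type*} {G : SimpleGraph V}

theorem isAcyclic_fromEdgeSet_of_length_lt_egirth {l : List (Sym2 V)}
    (hl : ∀ e ∈ l, e ∈ G.edgeSet) (h : (l.length : ℕ∞) < G.egirth) :
    (fromEdgeSet {e | e ∈ l}).IsAcyclic := by
  intro a c hc
  have hle : fromEdgeSet {e | e ∈ l} ≤ G := fun u v huv ↦
    hl s(u, v) ((fromEdgeSet_adj _).1 huv).1
  have hsub : c.edges ⊆ l := fun e he ↦ by
    have := c.edges_subset_edgeSet he
    rw [edgeSet_fromEdgeSet] at this
    exact this.1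
  have hlen : c.length ≤ l.length := by
    simpa using (hc.edges_nodup.subperm hsub).length_le
  have hgirth : G.egirth ≤ c.length := by
    simpa using egirth_le_length (hc.mapLe hle)
  exact (hgirth.trans (by exact_mod_cast hlen)).not_gt h

theorem walk_eq_of_isChain_edges_of_lt_egirth {u v : V} {p q : G.Walk u v}
    (hp : p.edges.IsChain (· ≠ ·)) (hq : q.edges.IsChain (· ≠ ·))
    (h : ((p.length + q.length : ℕ) : ℕ∞) < G.egirth) : p = q := by
  set K : SimpleGraph V := fromEdgeSet {e | e ∈ p.edges ++ q.edges} with hK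
  have hG : ∀ e ∈ p.edges ++ q.edges, e ∈ G.edgeSet := fun e he ↦
    (List.mem_append.1 he).elim (p.edges_subset_edgeSet ·) (q.edges_subset_edgeSet ·)
  have hKG : ∀ e ∈ p.edges ++ q.edges, e ∈ K.edgeSet := fun e he ↦ by
    rw [hK, edgeSet_fromEdgeSet]
    exact ⟨he, G.not_isDiag_of_mem_edgeSet (hG e he)⟩
  have hacyc : K.IsAcyclic := isAcyclic_fromEdgeSet_of_length_lt_egirth hG (by simpa using h)
  have hpK : ∀ e ∈ p.edges, e ∈ K.edgeSet := fun e he ↦ hKG e (List.mem_append_left _ he)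
  have hqK : ∀ e ∈ q.edges, e ∈ K.edgeSet := fun e he ↦ hKG e (List.mem_append_right _ he)
  have hpath : p.transfer K hpK = q.transfer K hqK :=
    congrArg Subtype.val ((hacyc.subsingleton_path u v).elim
      ⟨_, (hacyc.isPath_iff_isChain _).2 (by rwa [Walk.edges_transfer])⟩
      ⟨_, (hacyc.isPath_iff_isChain _).2 (by rwa [Walk.edges_transfer])⟩)
  apply Walk.ext_support
  rw [← p.support_transfer hpK, hpath, q.support_transfer]

section Fintype

variable [Fintype V] [DecidableRel G.Adj]

theorem sum_dart_snd (f : V → ℝ) : ∑ d : G.Dart, f d.snd = ∑ v, G.degree v * f v := by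
  have := Classical.decEq V
  calc ∑ d : G.Dart, f d.snd
    _ = ∑ d : G.Dart, f d.fst :=
      Fintype.sum_bijective _ Dart.symm_involutive.bijective _ _ fun _ ↦ rfl
    _ = ∑ v, ∑ d : G.Dart with d.fst = v, f v := (sum_fiberwise' _ _ _).symm
    _ = ∑ v, G.degree v * f v := by
      simp_rw [sum_const, dart_fst_fiber_card_eq_degree, nsmul_eq_mul]

section DecidableEq

variable [DecidableEq V]

/-- The darts that can follow `d` in a non-backtracking walk: those leaving the head of `d`,
except for the reversal of `d`. -/
def nonbacktrackingSuccs (d : G.Dart) : Finset G.Dart :=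
  ({e | e.fst = d.snd} : Finset G.Dart).erase d.symm

/-- The number of non-backtracking walks that start with the dart `d` and make `k` further steps. -/
def nonbacktrackingCount : ℕ → G.Dart → ℕ
  | 0, _ => 1
  | k + 1, d => ∑ e ∈ nonbacktrackingSuccs d, nonbacktrackingCount k e

/-- The set of end vertices of the non-backtracking walks that start with the dart `d` and make
`k` further steps. -/
def nonbacktrackingEnds : ℕ → G.Dart → Finset V
  | 0, d => {d.snd}
  | k + 1, d => (nonbacktrackingSuccs d).biUnion (nonbacktrackingEnds k)

theorem mem_nonbacktrackingSuccs {d e : G.Dart} :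
    e ∈ nonbacktrackingSuccs d ↔ e ≠ d.symm ∧ e.fst = d.snd := by
  simp [nonbacktrackingSuccs]

theorem symm_mem_nonbacktrackingSuccs_symm {d e : G.Dart} :
    d.symm ∈ nonbacktrackingSuccs e.symm ↔ e ∈ nonbacktrackingSuccs d := by
  rw [mem_nonbacktrackingSuccs, mem_nonbacktrackingSuccs, Dart.symm_symm, ne_comm]
  exact and_congr_right' eq_comm

theorem card_nonbacktrackingSuccs (d : G.Dart) :
    #(nonbacktrackingSuccs d) = G.degree d.snd - 1 := by
  rw [nonbacktrackingSuccs, card_erase_of_mem (by simp), dart_fst_fiber_card_eq_degree]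

theorem card_filter_mem_nonbacktrackingSuccs (e : G.Dart) :
    #{d | e ∈ nonbacktrackingSuccs d} = G.degree e.fst - 1 := by
  rw [show e.fst = e.symm.snd from rfl, ← card_nonbacktrackingSuccs]
  refine card_bijective _ Dart.symm_involutive.bijective fun d ↦ ?_
  rw [symm_mem_nonbacktrackingSuccs_symm, mem_filter_univ]

theorem nonbacktrackingSuccs_nonempty {d : G.Dart} (hd : 2 ≤ G.degree d.snd) :
    (nonbacktrackingSuccs d).Nonempty := by
  rw [← card_pos, card_nonbacktrackingSuccs]
  omega

theorem sum_average_nonbacktrackingSuccs (hdeg : ∀ v, 2 ≤ G.degree v) (f : G.Dart → ℝ) :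
    ∑ d, (∑ e ∈ nonbacktrackingSuccs d, f e) / #(nonbacktrackingSuccs d) = ∑ e, f e := by
  calc ∑ d, (∑ e ∈ nonbacktrackingSuccs d, f e) / #(nonbacktrackingSuccs d)
    _ = ∑ d, ∑ e ∈ nonbacktrackingSuccs d, f e / (G.degree e.fst - 1 : ℕ) := by
      refine sum_congr rfl fun d _ ↦ ?_
      rw [sum_div]
      refine sum_congr rfl fun e he ↦ ?_
      rw [card_nonbacktrackingSuccs, (mem_nonbacktrackingSuccs.1 he).2]
    _ = ∑ e, ∑ d with e ∈ nonbacktrackingSuccs d, f e / (G.degree e.fst - 1 : ℕ) :=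
      sum_comm' fun d e ↦ by simp
    _ = ∑ e, f e := by
      refine sum_congr rfl fun e _ ↦ ?_
      have hne : ((G.degree e.fst - 1 : ℕ) : ℝ) ≠ 0 := by
        have := hdeg e.fst
        exact_mod_cast (by omega : G.degree e.fst - 1 ≠ 0)
      rw [sum_const, card_filter_mem_nonbacktrackingSuccs, nsmul_eq_mul, mul_div_cancel₀ _ hne]

theorem nonbacktrackingCount_pos (hdeg : ∀ v, 2 ≤ G.degree v) (k : ℕ) (d : G.Dart) :
    0 < nonbacktrackingCount k d := by
  induction k generalizing d with
  | zero => exact one_pos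
  | succ k ih => exact sum_pos (fun e _ ↦ ih e) (nonbacktrackingSuccs_nonempty (hdeg d.snd))

theorem log_card_add_average_log_le_log_nonbacktrackingCount_succ
    (hdeg : ∀ v, 2 ≤ G.degree v) (k : ℕ) (d : G.Dart) :
    Real.log #(nonbacktrackingSuccs d) +
        (∑ e ∈ nonbacktrackingSuccs d, Real.log (nonbacktrackingCount k e)) /
          #(nonbacktrackingSuccs d) ≤
      Real.log (nonbacktrackingCount (k + 1) d) := by
  have hne := nonbacktrackingSuccs_nonempty (hdeg d.snd)
  have hcard : (#(nonbacktrackingSuccs d) : ℝ) ≠ 0 := by simpa using hne.ne_empty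
  have hpos : ∀ e, (0 : ℝ) < nonbacktrackingCount k e := fun e ↦
    mod_cast nonbacktrackingCount_pos hdeg k e
  have hjensen := sum_log_div_card_le_log_sum_div_card hne fun e _ ↦ hpos e
  rw [Real.log_div (sum_pos (fun e _ ↦ hpos e) hne).ne' hcard] at hjensen
  rw [nonbacktrackingCount, Nat.cast_sum]
  linarith

theorem mul_sum_log_card_le_sum_log_nonbacktrackingCount (hdeg : ∀ v, 2 ≤ G.degree v) (k : ℕ) :
    k * ∑ d : G.Dart, Real.log #(nonbacktrackingSuccs d) ≤
      ∑ d : G.Dart, Real.log (nonbacktrackingCount k d) := by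
  induction k with
  | zero => simp [nonbacktrackingCount]
  | succ k ih =>
    have hstep := sum_le_sum fun d (_ : d ∈ univ) ↦
      log_card_add_average_log_le_log_nonbacktrackingCount_succ hdeg k d
    rw [sum_add_distrib, sum_average_nonbacktrackingSuccs hdeg] at hstep
    push_cast
    linarith

theorem card_dart_mul_log_le_sum_log_card_nonbacktrackingSuccs [Nonempty V]
    (hdeg : ∀ v, 2 ≤ G.degree v) {δ : ℝ} (hδ : 1 < δ)
    (h : δ * Fintype.card V ≤ Fintype.card G.Dart) :
    Fintype.card G.Dart * Real.log (δ - 1) ≤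
      ∑ d : G.Dart, Real.log #(nonbacktrackingSuccs d) := by
  set n : ℝ := (Fintype.card V : ℝ)
  have hn : 0 < n := Nat.cast_pos.2 Fintype.card_pos
  have hsum : ∑ v, (G.degree v : ℝ) = Fintype.card G.Dart := by
    exact_mod_cast G.dart_card_eq_sum_degrees.symm
  have hjensen := convexOn_mul_log_sub_one.map_sum_le (t := univ) (w := fun _ : V ↦ n⁻¹)
    (p := fun v ↦ (G.degree v : ℝ)) (fun _ _ ↦ by positivity)
    (by simp [n]) (fun v _ ↦ by simpa using hdeg v)
  simp only [smul_eq_mul, ← mul_sum, hsum] at hjensen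
  rw [mul_assoc, mul_le_mul_iff_right₀ (inv_pos.2 hn)] at hjensen
  have havg : δ ≤ n⁻¹ * Fintype.card G.Dart := by
    rwa [← div_eq_inv_mul, le_div_iff₀ hn]
  calc Fintype.card G.Dart * Real.log (δ - 1)
    _ ≤ Fintype.card G.Dart * Real.log (n⁻¹ * Fintype.card G.Dart - 1) := by
      gcongr
    _ ≤ ∑ v, G.degree v * Real.log (G.degree v - 1) := hjensen
    _ = ∑ d : G.Dart, Real.log (G.degree d.snd - 1) :=
      (sum_dart_snd fun v ↦ Real.log (G.degree v - 1)).symm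
    _ = ∑ d : G.Dart, Real.log #(nonbacktrackingSuccs d) := by
      refine sum_congr rfl fun d _ ↦ ?_
      rw [card_nonbacktrackingSuccs, Nat.cast_pred (two_pos.trans_le (hdeg d.snd))]

theorem card_dart_mul_pow_le_sum_nonbacktrackingCount [Nonempty V]
    (hdeg : ∀ v, 2 ≤ G.degree v) {δ : ℝ} (hδ : 1 < δ)
    (h : δ * Fintype.card V ≤ Fintype.card G.Dart) (k : ℕ) :
    Fintype.card G.Dart * (δ - 1) ^ k ≤ ∑ d : G.Dart, (nonbacktrackingCount k d : ℝ) := by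
  have hpos : ∀ d : G.Dart, (0 : ℝ) < nonbacktrackingCount k d := fun d ↦
    mod_cast nonbacktrackingCount_pos hdeg k d
  have hdart : (0 : ℝ) < Fintype.card G.Dart := lt_of_lt_of_le (by positivity) h
  have hne : (univ : Finset G.Dart).Nonempty := by
    rw [← card_pos, card_univ]
    exact_mod_cast hdart
  have hlog : k * Real.log (δ - 1) ≤
      Real.log ((∑ d : G.Dart, (nonbacktrackingCount k d : ℝ)) / Fintype.card G.Dart) :=
    calc k * Real.log (δ - 1)
      _ = k * (Fintype.card G.Dart * Real.log (δ - 1)) / Fintype.card G.Dart := by field_simp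
      _ ≤ (∑ d : G.Dart, Real.log (nonbacktrackingCount k d)) / Fintype.card G.Dart := by
        gcongr
        exact (mul_le_mul_of_nonneg_left
          (card_dart_mul_log_le_sum_log_card_nonbacktrackingSuccs hdeg hδ h) k.cast_nonneg).trans
          (mul_sum_log_card_le_sum_log_nonbacktrackingCount hdeg k)
      _ ≤ _ := sum_log_div_card_le_log_sum_div_card hne fun d _ ↦ hpos d
  have hδ' : 0 < δ - 1 := sub_pos.2 hδ
  rw [← Real.log_pow, Real.log_le_log_iff (by positivity)
    (div_pos (sum_pos (fun d _ ↦ hpos d) hne) hdart), le_div_iff₀' hdart] at hlog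
  exact hlog

theorem exists_walk_of_mem_nonbacktrackingEnds {k : ℕ} {d : G.Dart} {x : V}
    (hx : x ∈ nonbacktrackingEnds k d) :
    ∃ p : G.Walk d.snd x, p.length = k ∧ (Walk.cons d.adj p).edges.IsChain (· ≠ ·) := by
  induction k generalizing d with
  | zero =>
    obtain rfl : x = d.snd := by simpa [nonbacktrackingEnds] using hx
    exact ⟨.nil, by simp⟩
  | succ k ih =>
    obtain ⟨e, he, hx⟩ := mem_biUnion.1 hx
    obtain ⟨p, hp, hchain⟩ := ih hx
    obtain ⟨hne, hfst⟩ := mem_nonbacktrackingSuccs.1 he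
    obtain ⟨⟨u, v⟩, huv⟩ := d
    obtain ⟨⟨v', w⟩, hvw⟩ := e
    obtain rfl : v' = v := hfst
    refine ⟨.cons hvw p, by simp [hp], ?_⟩
    rw [Walk.edges_cons, Walk.edges_cons, List.isChain_cons_cons, ← Walk.edges_cons hvw]
    refine ⟨fun hedge ↦ hne ?_, hchain⟩
    rw [Sym2.eq_swap, Sym2.congr_right] at hedge
    obtain rfl : u = w := hedge
    rfl

theorem pairwiseDisjoint_nonbacktrackingEnds {k : ℕ} (v : V)
    (h : ((2 * (k + 1) : ℕ) : ℕ∞) < G.egirth) :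
    {d : G.Dart | d.fst = v}.PairwiseDisjoint (nonbacktrackingEnds k) := by
  rintro ⟨⟨u, w⟩, hw⟩ (rfl : u = v) ⟨⟨u', w'⟩, hw'⟩ (rfl : u' = u) hne
  refine disjoint_left.2 fun x hx hx' ↦ hne ?_
  obtain ⟨p, hp, hchain⟩ := exists_walk_of_mem_nonbacktrackingEnds hx
  obtain ⟨p', hp', hchain'⟩ := exists_walk_of_mem_nonbacktrackingEnds hx'
  have heq := walk_eq_of_isChain_edges_of_lt_egirth hchain hchain' (by
    rwa [Walk.length_cons, Walk.length_cons, hp, hp', ← two_mul])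
  injection heq with _ hww'
  subst hww'
  rfl

theorem card_nonbacktrackingEnds {k : ℕ} (d : G.Dart) (h : ((2 * k : ℕ) : ℕ∞) < G.egirth) :
    #(nonbacktrackingEnds k d) = nonbacktrackingCount k d := by
  induction k generalizing d with
  | zero => rfl
  | succ k ih =>
    rw [nonbacktrackingEnds, nonbacktrackingCount, card_biUnion]
    · exact sum_congr rfl fun e _ ↦ ih e (lt_of_le_of_lt (by gcongr; omega) h)
    · exact (pairwiseDisjoint_nonbacktrackingEnds d.snd h).subset fun e he ↦
        (mem_nonbacktrackingSuccs.1 he).2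

theorem sum_nonbacktrackingCount_le_card {k : ℕ} (v : V)
    (h : ((2 * (k + 1) : ℕ) : ℕ∞) < G.egirth) :
    ∑ d : G.Dart with d.fst = v, nonbacktrackingCount k d ≤ Fintype.card V := by
  have hk : ((2 * k : ℕ) : ℕ∞) < G.egirth := lt_of_le_of_lt (by gcongr; omega) h
  simp_rw [← card_nonbacktrackingEnds _ hk]
  rw [← card_biUnion]
  · exact card_le_univ _
  · simpa using pairwiseDisjoint_nonbacktrackingEnds v h

theorem card_edgeFinset_eq_card_edgeFinset_induce_compl_singleton_add_degree (v : V) :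
    #G.edgeFinset = #(G.induce {v}ᶜ).edgeFinset + G.degree v := by
  rw [card_edgeFinset_induce_compl_singleton, card_edgeFinset_deleteIncidenceSet,
    Nat.sub_add_cancel (G.degree_le_card_edgeFinset v)]

end DecidableEq

theorem mul_pow_le_card_of_two_le_degree [Nonempty V]
    (hdeg : ∀ v, 2 ≤ G.degree v) {δ : ℝ} (hδ : 1 < δ)
    (h : δ * Fintype.card V ≤ Fintype.card G.Dart) {k : ℕ}
    (hg : ((2 * (k + 1) : ℕ) : ℕ∞) < G.egirth) :
    δ * (δ - 1) ^ k ≤ Fintype.card V := by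
  have := Classical.decEq V
  have hn : (0 : ℝ) < Fintype.card V := by exact_mod_cast Fintype.card_pos
  have : 0 < δ - 1 := sub_pos.2 hδ
  refine le_of_mul_le_mul_right ?_ hn
  calc δ * (δ - 1) ^ k * Fintype.card V
    _ = δ * Fintype.card V * (δ - 1) ^ k := by ring
    _ ≤ Fintype.card G.Dart * (δ - 1) ^ k := by gcongr
    _ ≤ ∑ d : G.Dart, (nonbacktrackingCount k d : ℝ) :=
      card_dart_mul_pow_le_sum_nonbacktrackingCount hdeg hδ h k
    _ = ∑ v, ((∑ d : G.Dart with d.fst = v, nonbacktrackingCount k d : ℕ) : ℝ) := by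
      rw [← Nat.cast_sum, ← Nat.cast_sum, sum_fiberwise]
    _ ≤ ∑ _v : V, (Fintype.card V : ℝ) :=
      sum_le_sum fun v _ ↦ mod_cast sum_nonbacktrackingCount_le_card v hg
    _ = Fintype.card V * Fintype.card V := by simp

theorem mul_pow_le_card_of_mul_card_le_two_mul_card_edgeFinset [Nonempty V] {δ : ℝ} (hδ : 2 ≤ δ)
    (h : δ * Fintype.card V ≤ 2 * #G.edgeFinset) {k : ℕ}
    (hg : ((2 * (k + 1) : ℕ) : ℕ∞) < G.egirth) :
    δ * (δ - 1) ^ k ≤ Fintype.card V := by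
  classical
  induction hn : Fintype.card V generalizing V with
  | zero => exact absurd hn Fintype.card_ne_zero
  | succ n ih =>
    by_cases hdeg : ∀ v, 2 ≤ G.degree v
    · rw [← hn]
      refine mul_pow_le_card_of_two_le_degree hdeg (by linarith) ?_ hg
      rwa [dart_card_eq_twice_card_edges, Nat.cast_mul, Nat.cast_two]
    obtain ⟨v, hv⟩ := not_forall.1 hdeg
    have hcard : Fintype.card ({v}ᶜ : Set V) = n := by
      rw [Fintype.card_compl_set, hn, Fintype.card_unique, Nat.add_sub_cancel]
    have hedges : (#G.edgeFinset : ℝ) ≤ #(G.induce {v}ᶜ).edgeFinset + 1 := by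
      rw [card_edgeFinset_eq_card_edgeFinset_induce_compl_singleton_add_degree v]
      exact_mod_cast (by omega : _ + G.degree v ≤ _ + 1)
    rw [hn] at h
    push_cast at h ⊢
    have havg : δ * n ≤ 2 * #(G.induce {v}ᶜ).edgeFinset := by linarith
    have : Nonempty ({v}ᶜ : Set V) := by
      rw [← Fintype.card_pos_iff, hcard, Nat.pos_iff_ne_zero]
      rintro rfl
      have hedge : #G.edgeFinset = 0 := by simpa [hn] using G.card_edgeFinset_le_card_choose_two
      rw [hedge, Nat.cast_zero] at h
      linarith
    have hbound := ih (G := G.induce {v}ᶜ) (by rwa [hcard])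
      (hg.trans_le (Embedding.induce ({v}ᶜ : Set V)).isContained.egirth_le) hcard
    linarith

end Fintype

theorem girth_le_of_many_edges_general [Fintype V] {r : ℕ} (hr : 1 ≤ r)
    (h : (Fintype.card V : ℝ) ^ (1 + 1 / (r : ℝ)) + Fintype.card V < 2 * G.edgeSet.ncard) :
    G.egirth ≤ (2 * r : ℕ) := by
  classical
  by_contra! hg
  obtain ⟨k, rfl⟩ : ∃ k, r = k + 1 := ⟨r - 1, by omega⟩
  have hV : Nonempty V := by
    by_contra hV
    rw [not_nonempty_iff] at hV
    simp [Set.eq_empty_of_isEmpty G.edgeSet, not_lt.2 (Real.rpow_nonneg _ _)] at h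
  have hn : (1 : ℝ) ≤ Fintype.card V := by exact_mod_cast Fintype.card_pos
  set t : ℝ := (Fintype.card V : ℝ) ^ (1 / ((k + 1 : ℕ) : ℝ)) with ht_def
  have ht : 1 ≤ t := Real.one_le_rpow hn (by positivity)
  have htpow : t ^ (k + 1) = Fintype.card V := by
    rw [ht_def, one_div, Real.rpow_inv_natCast_pow (by positivity) (by omega)]
  have havg : (t + 1) * Fintype.card V ≤ 2 * #G.edgeFinset := by
    rw [Real.rpow_add (by linarith), Real.rpow_one, ← coe_edgeFinset, Set.ncard_coe_finset] at h
    linarith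
  have hmoore := mul_pow_le_card_of_mul_card_le_two_mul_card_edgeFinset (by linarith) havg hg
  rw [add_sub_cancel_right, ← htpow] at hmoore
  have : 0 < t ^ k := by positivity
  linarith [pow_succ' t k]

end

/-- A simple graph with `n` vertices and at least `n^(1+1/r) + 1` edges
has girth at most `2r`. -/
theorem girth_le_of_many_edges {V : Type*} [Fintype V] (G : SimpleGraph V)
    (n r : ℕ) (hn : Fintype.card V = n) (hr : 1 ≤ r)
    (h : (n : ℝ) ^ (1 + 1 / (r : ℝ)) + 1 ≤ (G.edgeSet.ncard : ℝ)) :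
    G.girth ≤ (2 * r : ℕ) := by
  have hle : (n : ℝ) ≤ (n : ℝ) ^ (1 + 1 / (r : ℝ)) := natCast_le_rpow_of_one_le n (by simp)
  exact ENat.toNat_le_of_le_natCast (girth_le_of_many_edges_general hr (by rw [hn]; linarith))
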